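/- (The solution operator maps bounded sets to bounded sets) Suppose |𝒢(x)| ≤ κ·‖x‖ for all x ∈ C([a,b],ℝ) with κ ∈ (0,1), f(·,u) is measurable for each u, |f(t,x)| ≤ κ₁(t)·Ψ(|x|) for all t ∈ (a,b) and x ∈ ℝ with κ₁ measurable, ψ'·κ₁ ∈ L¹(a,b), and Ψ: [0,∞) → [0,∞) nondecreasing. Then for every r > 0 and every continuous x: [a,b] → ℝ with ‖x‖ ≤ r such that t ↦ f(t,x(t)) is measurable, the function Sx is well defined and ‖Sx‖ ≤ κ·r + Ψ(r)·G_max·∫_a^b ψ'(τ)κ₁(τ) dτ, where G_max = L^{α+β−1}/Γ(α+β). -/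

import Mathlib

open MeasureTheory Set

/-- The Green function of the sequential fractional boundary value problem. -/
noncomputable def G (a b α β : ℝ) (ψ : ℝ → ℝ) (τ t : ℝ) : ℝ :=
  if τ ≤ t then
    (ψ t - ψ a) ^ β * (ψ b - ψ τ) ^ (α + β - 1) /
        (Real.Gamma (α + β) * (ψ b - ψ a) ^ β) -
      (ψ t - ψ τ) ^ (α + β - 1) / Real.Gamma (α + β)
  else
    (ψ t - ψ a) ^ β * (ψ b - ψ τ) ^ (α + β - 1) /
      (Real.Gamma (α + β) * (ψ b - ψ a) ^ β)

/-- The supremum norm of a function over the interval `[a,b]`. -/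
noncomputable def supNorm (a b : ℝ) (x : ℝ → ℝ) : ℝ :=
  ⨆ t : Set.Icc a b, |x ↑t|

/-- The solution operator `S` of the boundary value problem. -/
noncomputable def Sop (a b α β : ℝ) (ψ ψd : ℝ → ℝ) (f : ℝ → ℝ → ℝ)
    (𝒢 : (ℝ → ℝ) → ℝ) (x : ℝ → ℝ) (t : ℝ) : ℝ :=
  ((ψ t - ψ a) / (ψ b - ψ a)) ^ β * 𝒢 x +
    ∫ τ in a..b, G a b α β ψ τ t * ψd τ * f τ (x τ)

lemma G_abs_le (a b α β : ℝ) (hβ0 : 0 < β) (hαβ : 1 < α + β)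
    (ψ : ℝ → ℝ) (hmono : StrictMonoOn ψ (Icc a b)) (hab : a < b)
    (τ t : ℝ) (hτ : τ ∈ Icc a b) (ht : t ∈ Icc a b) :
    |G a b α β ψ τ t| ≤ (ψ b - ψ a) ^ (α + β - 1) / Real.Gamma (α + β) := by
  have ha : a ∈ Icc a b := ⟨le_rfl, hab.le⟩
  have hb : b ∈ Icc a b := ⟨hab.le, le_rfl⟩
  have hm := hmono.monotoneOn
  have hL : 0 < ψ b - ψ a := sub_pos.2 (hmono ha hb hab)
  have h1 : ψ a ≤ ψ t := hm ha ht ht.1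
  have h2 : ψ t ≤ ψ b := hm ht hb ht.2
  have h3 : ψ a ≤ ψ τ := hm ha hτ hτ.1
  have h4 : ψ τ ≤ ψ b := hm hτ hb hτ.2
  have hΓ : 0 < Real.Gamma (α + β) := Real.Gamma_pos_of_pos (by linarith)
  have hLβ : 0 < (ψ b - ψ a) ^ β := Real.rpow_pos_of_pos hL _
  have e1 : (ψ t - ψ a) ^ β ≤ (ψ b - ψ a) ^ β :=
    Real.rpow_le_rpow (by linarith) (by linarith) hβ0.le
  have e2 : (ψ b - ψ τ) ^ (α + β - 1) ≤ (ψ b - ψ a) ^ (α + β - 1) :=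
    Real.rpow_le_rpow (by linarith) (by linarith) (by linarith)
  have p1 : 0 ≤ (ψ t - ψ a) ^ β := Real.rpow_nonneg (by linarith) _
  have p2 : 0 ≤ (ψ b - ψ τ) ^ (α + β - 1) := Real.rpow_nonneg (by linarith) _
  have A0 : 0 ≤ (ψ t - ψ a) ^ β * (ψ b - ψ τ) ^ (α + β - 1) /
      (Real.Gamma (α + β) * (ψ b - ψ a) ^ β) := by positivity
  have A1 : (ψ t - ψ a) ^ β * (ψ b - ψ τ) ^ (α + β - 1) /
      (Real.Gamma (α + β) * (ψ b - ψ a) ^ β) ≤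
      (ψ b - ψ a) ^ (α + β - 1) / Real.Gamma (α + β) := by
    rw [div_le_div_iff₀ (by positivity) hΓ]
    have := mul_le_mul e1 e2 p2 hLβ.le
    nlinarith
  unfold G
  split_ifs with h
  · have h5 : ψ τ ≤ ψ t := hm hτ ht h
    have p3 : 0 ≤ (ψ t - ψ τ) ^ (α + β - 1) := Real.rpow_nonneg (by linarith) _
    have e3 : (ψ t - ψ τ) ^ (α + β - 1) ≤ (ψ b - ψ a) ^ (α + β - 1) :=
      Real.rpow_le_rpow (by linarith) (by linarith) (by linarith)
    have B0 : 0 ≤ (ψ t - ψ τ) ^ (α + β - 1) / Real.Gamma (α + β) := by positivity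
    have B1 : (ψ t - ψ τ) ^ (α + β - 1) / Real.Gamma (α + β) ≤
        (ψ b - ψ a) ^ (α + β - 1) / Real.Gamma (α + β) := by gcongr
    rw [abs_le]; constructor <;> linarith
  · rw [abs_of_nonneg A0]; exact A1

lemma G_aemeas (a b α β : ℝ) (ψ : ℝ → ℝ) (μ : Measure ℝ) (hψ : AEMeasurable ψ μ) (t : ℝ) :
    AEStronglyMeasurable (fun τ => G a b α β ψ τ t) μ := by
  have hg : Measurable (fun p : ℝ × ℝ => if p.1 ≤ t then
    (ψ t - ψ a) ^ β * (ψ b - p.2) ^ (α + β - 1) /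
        (Real.Gamma (α + β) * (ψ b - ψ a) ^ β) -
      (ψ t - p.2) ^ (α + β - 1) / Real.Gamma (α + β)
  else
    (ψ t - ψ a) ^ β * (ψ b - p.2) ^ (α + β - 1) /
      (Real.Gamma (α + β) * (ψ b - ψ a) ^ β)) := by
    refine Measurable.ite (measurableSet_le measurable_fst measurable_const) ?_ ?_ <;> fun_prop
  exact (hg.comp_aemeasurable (aemeasurable_id.prodMk hψ)).aestronglyMeasurable

theorem solution_operator_maps_bounded_to_bounded
    (a b α β κ : ℝ) (hab : a < b)
    (hα0 : 0 < α) (hα1 : α ≤ 1) (hβ0 : 0 < β) (hβ1 : β ≤ 1) (hαβ : 1 < α + β)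
    (ψ ψd : ℝ → ℝ)
    (hψ : ∀ t ∈ Set.Icc a b, HasDerivAt ψ (ψd t) t)
    (hψd_cont : ContinuousOn ψd (Set.Icc a b))
    (hψd_pos : ∀ t ∈ Set.Icc a b, 0 < ψd t)
    (f : ℝ → ℝ → ℝ) (𝒢 : (ℝ → ℝ) → ℝ) (κ₁ Ψ : ℝ → ℝ)
    (hκ0 : 0 < κ) (hκ1 : κ < 1)
    (h𝒢_bound : ∀ x : ℝ → ℝ, ContinuousOn x (Set.Icc a b) →
      |𝒢 x| ≤ κ * supNorm a b x)
    (hf_meas : ∀ u : ℝ,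
      AEStronglyMeasurable (fun t => f t u) (volume.restrict (Set.Ioo a b)))
    (hκ₁_meas : AEStronglyMeasurable κ₁ (volume.restrict (Set.Ioo a b)))
    (hκ₁_nonneg : ∀ t ∈ Set.Ioo a b, 0 ≤ κ₁ t)
    (hκ₁_int : IntervalIntegrable (fun t => ψd t * κ₁ t) volume a b)
    (hΨ_nonneg : ∀ s ∈ Set.Ici (0 : ℝ), 0 ≤ Ψ s)
    (hΨ_mono : MonotoneOn Ψ (Set.Ici (0 : ℝ)))
    (hf_growth : ∀ t ∈ Set.Ioo a b, ∀ u : ℝ, |f t u| ≤ κ₁ t * Ψ |u|) :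
    ∀ r > (0 : ℝ), ∀ x : ℝ → ℝ, ContinuousOn x (Set.Icc a b) →
      supNorm a b x ≤ r →
      AEStronglyMeasurable (fun t => f t (x t)) (volume.restrict (Set.Ioo a b)) →
      (∀ t ∈ Set.Icc a b,
        IntervalIntegrable (fun τ => G a b α β ψ τ t * ψd τ * f τ (x τ)) volume a b) ∧
      supNorm a b (Sop a b α β ψ ψd f 𝒢 x) ≤
        κ * r + Ψ r * ((ψ b - ψ a) ^ (α + β - 1) / Real.Gamma (α + β)) *
          ∫ τ in a..b, ψd τ * κ₁ τ := by
  intro r hr x hx hxr hfx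
  have ha : a ∈ Icc a b := ⟨le_rfl, hab.le⟩
  have hb : b ∈ Icc a b := ⟨hab.le, le_rfl⟩
  have hψc : ContinuousOn ψ (Icc a b) := fun t ht => (hψ t ht).continuousAt.continuousWithinAt
  have hmono : StrictMonoOn ψ (Icc a b) := by
    refine strictMonoOn_of_deriv_pos (convex_Icc a b) hψc fun t ht => ?_
    have ht' := interior_subset ht
    rw [(hψ t ht').deriv]
    exact hψd_pos t ht'
  have hL : 0 < ψ b - ψ a := sub_pos.2 (hmono ha hb hab)
  have hxb : ∀ t ∈ Icc a b, |x t| ≤ r := by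
    intro t ht
    refine le_trans ?_ hxr
    have hbdd : BddAbove (range fun t : Icc a b => |x t|) := by
      have := (isCompact_Icc.image_of_continuousOn hx.abs).bddAbove
      rwa [image_eq_range] at this
    exact le_ciSup hbdd ⟨t, ht⟩
  set M := (ψ b - ψ a) ^ (α + β - 1) / Real.Gamma (α + β) with hM
  have hM0 : 0 ≤ M := (abs_nonneg _).trans (G_abs_le a b α β hβ0 hαβ ψ hmono hab a a ha ha)
  have hbound : ∀ t ∈ Icc a b, ∀ τ ∈ Ioo a b,
      ‖G a b α β ψ τ t * ψd τ * f τ (x τ)‖ ≤ Ψ r * M * (ψd τ * κ₁ τ) := by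
    intro t ht τ hτ
    have hτ' := Ioo_subset_Icc_self hτ
    have g := G_abs_le a b α β hβ0 hαβ ψ hmono hab τ t hτ' ht
    have hk := hκ₁_nonneg τ hτ
    have hd := hψd_pos τ hτ'
    have hF : |f τ (x τ)| ≤ κ₁ τ * Ψ r :=
      (hf_growth τ hτ (x τ)).trans (mul_le_mul_of_nonneg_left
        (hΨ_mono (mem_Ici.2 (abs_nonneg _)) (mem_Ici.2 hr.le) (hxb τ hτ')) hk)
    rw [Real.norm_eq_abs, abs_mul, abs_mul, abs_of_pos hd]
    calc |G a b α β ψ τ t| * ψd τ * |f τ (x τ)| ≤ M * ψd τ * (κ₁ τ * Ψ r) := by gcongr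
      _ = _ := by ring
  have hint : IntervalIntegrable (fun τ => Ψ r * M * (ψd τ * κ₁ τ)) volume a b :=
    hκ₁_int.const_mul _
  have hI : ∀ t ∈ Icc a b,
      IntervalIntegrable (fun τ => G a b α β ψ τ t * ψd τ * f τ (x τ)) volume a b := by
    intro t ht
    rw [intervalIntegrable_iff_integrableOn_Ioo_of_le hab.le] at hint ⊢
    refine Integrable.mono' hint ?_ ?_
    · refine ((G_aemeas a b α β ψ _ ?_ t).mul ?_).mul hfx
      · exact (hψc.mono Ioo_subset_Icc_self).aemeasurable measurableSet_Ioo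
      · exact (hψd_cont.mono Ioo_subset_Icc_self).aestronglyMeasurable measurableSet_Ioo
    · exact (ae_restrict_iff' measurableSet_Ioo).2 (ae_of_all _ (hbound t ht))
  refine ⟨hI, ?_⟩
  have : Nonempty (Icc a b) := ⟨⟨a, ha⟩⟩
  refine ciSup_le ?_
  rintro ⟨t, ht⟩
  have h1 : |((ψ t - ψ a) / (ψ b - ψ a)) ^ β * 𝒢 x| ≤ κ * r := by
    have q0 : 0 ≤ (ψ t - ψ a) / (ψ b - ψ a) :=
      div_nonneg (sub_nonneg.2 (hmono.monotoneOn ha ht ht.1)) hL.le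
    have q1 : (ψ t - ψ a) / (ψ b - ψ a) ≤ 1 := by
      rw [div_le_one hL]
      linarith [hmono.monotoneOn ht hb ht.2]
    have q2 := Real.rpow_le_one q0 q1 hβ0.le
    have q3 := Real.rpow_nonneg q0 β
    have q4 : |𝒢 x| ≤ κ * r := (h𝒢_bound x hx).trans (mul_le_mul_of_nonneg_left hxr hκ0.le)
    rw [abs_mul, abs_of_nonneg q3]
    nlinarith [abs_nonneg (𝒢 x)]
  have h2 : |∫ τ in a..b, G a b α β ψ τ t * ψd τ * f τ (x τ)| ≤
      Ψ r * M * ∫ τ in a..b, ψd τ * κ₁ τ := by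
    rw [← intervalIntegral.integral_const_mul, ← Real.norm_eq_abs]
    refine intervalIntegral.norm_integral_le_of_norm_le hab.le ?_ hint
    have hne : ∀ᵐ τ : ℝ, τ ≠ b := by simp [ae_iff]
    filter_upwards [hne] with τ h hτ
    exact hbound t ht τ ⟨hτ.1, lt_of_le_of_ne hτ.2 h⟩
  exact (abs_add_le _ _).trans (add_le_add h1 h2)
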